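/- Let r ≥ 3 and s > 1, let m_1, ..., m_r be nonnegative integers and n_1, ..., n_s positive integers with cyclic conventions m_{r+1} = m_1 and n_{s+1} = n_1, and let 0 ≤ a ≤ s and 2 ≤ b ≤ r. Then F_{r,s}^{(b)}(m_1, m_2, ..., m_r; n; a; q) = Σ_{ℓ=0}^{m_1} q^{ℓ^2 + ℓ} · [m_1 choose ℓ] · [m_2+m_3+1 choose m_2-ℓ] · F_{r-1,s}^{(b-1)}(ℓ, m_3, ..., m_r; n; a; q). -/

import Mathlib

open Finset

noncomputable section

/-- The `q`-integer `[n] = (1 - x^n)/(1 - x)` at the value `x`. -/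
def qint (x : RatFunc ℚ) (n : ℕ) : RatFunc ℚ := (1 - x ^ n) / (1 - x)

/-- The `q`-factorial `[n]! = [1][2]⋯[n]`, with `[0]! = 1`. -/
def qfact (x : RatFunc ℚ) (n : ℕ) : RatFunc ℚ := ∏ i ∈ Finset.range n, qint x (i + 1)

/-- The Gaussian (q-binomial) coefficient `[N choose K]`, equal to
`[N]!/([K]![N-K]!)` if `0 ≤ K ≤ N`, and `0` otherwise. -/
def qbinom (x : RatFunc ℚ) (N K : ℤ) : RatFunc ℚ :=
  if 0 ≤ K ∧ K ≤ N then qfact x N.toNat / (qfact x K.toNat * qfact x (N - K).toNat) else 0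

/-- The alternating sum `F_{r,s}^{(b)}(m; n; a; x)`.  The cyclic vectors
`(m_1, …, m_r)` and `(n_1, …, n_s)` are given as functions `m n : ℕ → ℕ` on
`0, …, r-1` and `0, …, s-1` respectively, with cyclic successor `(i+1) % r`
(so `m_{r+1} = m_1` and `n_{s+1} = n_1`). -/
def F (r s a b : ℕ) (m n : ℕ → ℕ) (x : RatFunc ℚ) : RatFunc ℚ :=
  (qfact x (m 0) * qfact x (n 0) * qfact x (m (r - 1) + n (s - 1) + 1)) /
      (qfact x (m 0 + m (r - 1) + 1) * qfact x (n 0 + n (s - 1))) *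
    ∑ k ∈ Finset.Icc (-(n 0 : ℤ)) ((n 0 : ℤ)),
      (-1 : RatFunc ℚ) ^ k *
        x ^ ((a : ℤ) * k ^ 2 + (2 * (b : ℤ) - 1) * (k * (k - 1) / 2)) *
        (∏ i ∈ Finset.range r,
          qbinom x ((m i : ℤ) + (m ((i + 1) % r) : ℤ) + 1) ((m i : ℤ) + k)) *
        (∏ j ∈ Finset.range s,
          qbinom x ((n j : ℤ) + (n ((j + 1) % s) : ℤ)) ((n j : ℤ) + k))

/-!
The recurrence holds separately for each `k`. The `m`-dependent factors of the `k`-th summand that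
change under deletion are `[A]! [A+B+1 choose A+k] [B+C+1 choose B+k] / [A+1-k]!` with
`(A, B, C) = (m_1, m_2, m_3)`: the factor `1/[m_1+m_r+1]!` of the prefactor has cancelled against
the cyclic `q`-binomial `[m_r+m_1+1 choose m_r+k]`. Once all `q`-binomials are written with
reciprocal `q`-factorials, the sum over `ℓ` becomes
`Σ_ℓ q^(ℓ²+ℓ) / ([A-ℓ]! [B-ℓ]! [ℓ+k]! [ℓ+1-k]!)`, which is the `q`-Chu–Vandermonde sum
`Σ_u q^(u(u+N-K)) [M choose u] [N choose K-u] = [M+N choose K]` at `u = ℓ + k`, `M = A + k`,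
`N = B + 1 - k`, `K = B + k`, up to the factor `q^(k(k-1))` by which the powers of `q` belonging to
`b` and `b - 1` differ.
-/

/-- The reciprocal `q`-factorial `1/[z]!`, extended by `0` to negative `z` in the same way as `1/Γ`,
so that `qbinom` factors without a case distinction on its lower index. -/
def qfactInv (x : RatFunc ℚ) (z : ℤ) : RatFunc ℚ :=
  if 0 ≤ z then (qfact x z.toNat)⁻¹ else 0

/-- The `q`-integer `[z] = (1 - x^z)/(1 - x)` for an arbitrary integer `z`. -/
def qintZ (x : RatFunc ℚ) (z : ℤ) : RatFunc ℚ := (1 - x ^ z) / (1 - x)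

/-- The part of the `k`-th summand of `F r s a b m n x`, together with its share of the prefactor,
that depends on more of `m` than the last entry `m_r`. -/
def mFactor (x : RatFunc ℚ) (r : ℕ) (m : ℕ → ℕ) (k : ℤ) : RatFunc ℚ :=
  qfact x (m 0) / qfact x (m 0 + m (r - 1) + 1) *
    ∏ i ∈ range r, qbinom x ((m i : ℤ) + (m ((i + 1) % r) : ℤ) + 1) ((m i : ℤ) + k)

/-- The part of the `k`-th summand of `F r s a b m n x`, together with its share of the prefactor,
that depends on `n`; the argument `R` stands for the last entry `m_r`. -/
def nFactor (x : RatFunc ℚ) (s : ℕ) (n : ℕ → ℕ) (R : ℕ) (k : ℤ) : RatFunc ℚ :=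
  qfact x (n 0) * qfact x (R + n (s - 1) + 1) / qfact x (n 0 + n (s - 1)) *
    ∏ j ∈ range s, qbinom x ((n j : ℤ) + (n ((j + 1) % s) : ℤ)) ((n j : ℤ) + k)

variable {x : RatFunc ℚ}

lemma qint_ne_zero (hx : ¬IsOfFinOrder x) {n : ℕ} (hn : n ≠ 0) : qint x n ≠ 0 := by
  have one_sub_pow_ne_zero {j : ℕ} (hj : j ≠ 0) : 1 - x ^ j ≠ 0 := fun h =>
    hx (isOfFinOrder_iff_pow_eq_one.mpr ⟨j, Nat.pos_of_ne_zero hj, (sub_eq_zero.mp h).symm⟩)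
  exact div_ne_zero (one_sub_pow_ne_zero hn) (by simpa using one_sub_pow_ne_zero one_ne_zero)

lemma qfact_ne_zero (hx : ¬IsOfFinOrder x) (n : ℕ) : qfact x n ≠ 0 :=
  prod_ne_zero_iff.mpr fun i _ => qint_ne_zero hx i.succ_ne_zero

lemma qfact_succ (x : RatFunc ℚ) (n : ℕ) : qfact x (n + 1) = qfact x n * qint x (n + 1) :=
  prod_range_succ _ _

lemma qintZ_natCast (x : RatFunc ℚ) (n : ℕ) : qintZ x n = qint x n := by
  simp [qintZ, qint]

lemma qintZ_add (hx0 : x ≠ 0) (u v : ℤ) : qintZ x (u + v) = qintZ x u + x ^ u * qintZ x v := by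
  simp only [qintZ, zpow_add₀ hx0]
  ring

lemma qfactInv_of_neg (x : RatFunc ℚ) {z : ℤ} (hz : z < 0) : qfactInv x z = 0 :=
  if_neg hz.not_ge

lemma nonneg_of_qfactInv_ne_zero {z : ℤ} (hz : qfactInv x z ≠ 0) : 0 ≤ z :=
  not_lt.mp (hz <| qfactInv_of_neg x ·)

lemma qfactInv_natCast (x : RatFunc ℚ) (n : ℕ) : qfactInv x n = (qfact x n)⁻¹ := by
  simp [qfactInv]

lemma qintZ_mul_qfactInv (hx : ¬IsOfFinOrder x) (z : ℤ) :
    qintZ x z * qfactInv x z = qfactInv x (z - 1) := by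
  rcases lt_trichotomy z 0 with hz | rfl | hz
  · rw [qfactInv_of_neg x hz, qfactInv_of_neg x (by lia), mul_zero]
  · rw [qfactInv_of_neg x (by lia : (0 : ℤ) - 1 < 0)]
    simp [qintZ]
  · obtain ⟨n, rfl⟩ : ∃ n : ℕ, z = (n + 1 : ℕ) := ⟨(z - 1).toNat, by lia⟩
    have hn := qint_ne_zero hx n.succ_ne_zero
    rw [show ((n + 1 : ℕ) : ℤ) - 1 = n by push_cast; ring, qintZ_natCast, qfactInv_natCast,
      qfactInv_natCast, qfact_succ, mul_inv, mul_left_comm, mul_inv_cancel₀ hn, mul_one]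

lemma qbinom_eq_zero (x : RatFunc ℚ) {N K : ℤ} (hK : K < 0 ∨ N < K) : qbinom x N K = 0 :=
  if_neg (by lia)

lemma qbinom_natCast (x : RatFunc ℚ) (N : ℕ) (K : ℤ) :
    qbinom x N K = qfact x N * qfactInv x K * qfactInv x (N - K) := by
  by_cases hK : 0 ≤ K ∧ K ≤ N
  · rw [qbinom, if_pos hK, qfactInv, qfactInv, if_pos hK.1, if_pos (by lia), Int.toNat_natCast,
      div_eq_mul_inv, mul_inv, mul_assoc]
  · rw [qbinom, if_neg hK]
    rcases not_and_or.mp hK with hK | hK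
    · rw [qfactInv_of_neg x (by lia : K < 0), mul_zero, zero_mul]
    · rw [qfactInv_of_neg x (by lia : (N : ℤ) - K < 0), mul_zero]

lemma qbinom_add_add_one (x : RatFunc ℚ) (A B : ℕ) (k : ℤ) :
    qbinom x (A + B + 1) (A + k) =
      qfact x (A + B + 1) * qfactInv x (A + k) * qfactInv x (B + 1 - k) := by
  have h := qbinom_natCast x (A + B + 1) (A + k)
  push_cast at h
  rw [h]
  ring_nf

lemma qbinom_zero_zero (x : RatFunc ℚ) : qbinom x 0 0 = 1 := by
  simp [qbinom, qfact]

lemma hasFiniteSupport_qbinom (x : RatFunc ℚ) (N : ℤ) : (qbinom x N).HasFiniteSupport :=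
  (Set.finite_Icc 0 N).subset fun _ hK => by_contra fun h => hK (if_neg h)

lemma qfactInv_mul_qfactInv (hx : ¬IsOfFinOrder x) (u v : ℤ) :
    qfactInv x u * qfactInv x v = qfactInv x (u + v) * qbinom x (u + v) u := by
  rcases lt_or_ge (u + v) 0 with h | h
  · rw [qfactInv_of_neg x h, zero_mul, mul_eq_zero]
    exact (by lia : u < 0 ∨ v < 0).imp (qfactInv_of_neg x) (qfactInv_of_neg x)
  · obtain ⟨N, hN⟩ := Int.eq_ofNat_of_zero_le h
    obtain rfl : v = N - u := by lia
    rw [hN, qbinom_natCast, qfactInv_natCast, mul_assoc,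
      inv_mul_cancel_left₀ (qfact_ne_zero hx N)]

lemma qbinom_succ (hx0 : x ≠ 0) (hx : ¬IsOfFinOrder x) (N : ℕ) (K : ℤ) :
    qbinom x (N + 1 : ℕ) K = qbinom x N K + x ^ (N + 1 - K) * qbinom x N (K - 1) := by
  have hsplit : qint x (N + 1) = qintZ x (N + 1 - K) + x ^ (N + 1 - K) * qintZ x K := by
    rw [← qintZ_add hx0, ← qintZ_natCast]
    push_cast
    ring_nf
  have hK := qintZ_mul_qfactInv hx K
  have hNK := qintZ_mul_qfactInv hx (N + 1 - K)
  rw [show (N : ℤ) + 1 - K - 1 = N - K by ring] at hNK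
  rw [qbinom_natCast, qbinom_natCast, qbinom_natCast, qfact_succ, hsplit, ← hK, ← hNK,
    show (N : ℤ) - (K - 1) = N + 1 - K by ring]
  push_cast
  ring

lemma qbinom_chu_vandermonde (hx0 : x ≠ 0) (hx : ¬IsOfFinOrder x) (M N : ℕ) (K : ℤ) :
    ∑ᶠ u : ℤ, x ^ (u * (u + N - K)) * qbinom x M u * qbinom x N (K - u) =
      qbinom x (M + N : ℕ) K := by
  induction M generalizing K with
  | zero =>
    rw [finsum_eq_single _ 0 fun u hu => by rw [qbinom_eq_zero x (by lia), mul_zero, zero_mul]]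
    simp [qbinom_zero_zero]
  | succ M ih =>
    let f (K u : ℤ) := x ^ (u * (u + N - K)) * qbinom x M u * qbinom x N (K - u)
    have hf (K : ℤ) : (f K).HasFiniteSupport :=
      (hasFiniteSupport_qbinom x M).subset fun u hu h => hu (by simp [f, h])
    let c := x ^ ((M + N : ℕ) + 1 - K)
    have hf_shift : (fun u => c * f (K - 1) (u - 1)).HasFiniteSupport :=
      ((hf (K - 1)).preimage sub_left_injective.injOn).subset
        (Function.support_const_smul_subset c _)
    have pascal (u : ℤ) : x ^ (u * (u + N - K)) * qbinom x (M + 1 : ℕ) u * qbinom x N (K - u) =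
        f K u + c * f (K - 1) (u - 1) := by
      have hexp : x ^ (u * (u + N - K)) * x ^ ((M : ℤ) + 1 - u) =
          c * x ^ ((u - 1) * (u - 1 + N - (K - 1))) := by
        simp only [c, ← zpow_add₀ hx0]
        push_cast
        ring_nf
      simp only [f, qbinom_succ hx0 hx, sub_sub_sub_cancel_right]
      linear_combination qbinom x M (u - 1) * qbinom x N (K - u) * hexp
    calc ∑ᶠ u : ℤ, x ^ (u * (u + N - K)) * qbinom x (M + 1 : ℕ) u * qbinom x N (K - u)
        = (∑ᶠ u, f K u) + c * ∑ᶠ u, f (K - 1) (u - 1) := by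
          rw [finsum_congr pascal, finsum_add_distrib (hf K) hf_shift, mul_finsum]
      _ = (∑ᶠ u, f K u) + c * ∑ᶠ u, f (K - 1) u := by
          rw [← finsum_comp_equiv (Equiv.subRight (1 : ℤ)) (f := f (K - 1))]
          rfl
      _ = qbinom x (M + 1 + N : ℕ) K := by
          rw [ih, ih, ← qbinom_succ hx0 hx, add_right_comm]

lemma qfactInv_chu_vandermonde (hx0 : x ≠ 0) (hx : ¬IsOfFinOrder x) (M N K : ℤ) :
    ∑ᶠ u : ℤ, x ^ (u * (u + N - K)) *
        (qfactInv x u * qfactInv x (M - u) * (qfactInv x (K - u) * qfactInv x (N - (K - u)))) =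
      qfactInv x M * qfactInv x N * qbinom x (M + N) K := by
  have hterm (u : ℤ) : x ^ (u * (u + N - K)) *
        (qfactInv x u * qfactInv x (M - u) * (qfactInv x (K - u) * qfactInv x (N - (K - u)))) =
      qfactInv x M * qfactInv x N *
        (x ^ (u * (u + N - K)) * qbinom x M u * qbinom x N (K - u)) := by
    rw [qfactInv_mul_qfactInv hx, qfactInv_mul_qfactInv hx, add_sub_cancel, add_sub_cancel]
    ring
  rw [finsum_congr hterm, ← mul_finsum]
  rcases lt_or_ge M 0 with hM | hM
  · simp [qfactInv_of_neg x hM]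
  rcases lt_or_ge N 0 with hN | hN
  · simp [qfactInv_of_neg x hN]
  lift M to ℕ using hM
  lift N to ℕ using hN
  rw [qbinom_chu_vandermonde hx0 hx, Nat.cast_add]

lemma finsum_int_eq_sum_range {M : Type*} [AddCommMonoid M] {f : ℤ → M} {n : ℕ}
    (hf : ∀ ℓ, f ℓ ≠ 0 → 0 ≤ ℓ ∧ ℓ < n) : ∑ᶠ ℓ, f ℓ = ∑ ℓ ∈ range n, f ℓ := by
  rw [finsum_eq_sum_of_support_subset (s := (range n).map Nat.castEmbedding) f, sum_map]
  · rfl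
  · intro ℓ hℓ
    obtain ⟨h0, hn⟩ := hf ℓ hℓ
    lift ℓ to ℕ using h0
    simpa using hn

lemma sum_qfactInv (hx0 : x ≠ 0) (hx : ¬IsOfFinOrder x) (A B : ℕ) (k : ℤ) :
    ∑ ℓ ∈ range (A + 1), x ^ (ℓ ^ 2 + ℓ) *
        (qfactInv x (A - ℓ) * qfactInv x (B - ℓ) * qfactInv x (ℓ + k) * qfactInv x (ℓ + 1 - k)) =
      x ^ (k * (k - 1)) *
        (qfactInv x (A + k) * qfactInv x (B + 1 - k) * qbinom x (A + B + 1) (B + k)) := by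
  let g (ℓ : ℤ) := x ^ (ℓ ^ 2 + ℓ) *
    (qfactInv x (A - ℓ) * qfactInv x (B - ℓ) * qfactInv x (ℓ + k) * qfactInv x (ℓ + 1 - k))
  let f (u : ℤ) := x ^ (u * (u + (B + 1 - k) - (B + k))) * (qfactInv x u * qfactInv x (A + k - u) *
    (qfactInv x (B + k - u) * qfactInv x (B + 1 - k - (B + k - u))))
  have hsupp (ℓ : ℤ) (hℓ : g ℓ ≠ 0) : 0 ≤ ℓ ∧ ℓ < (A + 1 : ℕ) := by
    simp only [g, mul_ne_zero_iff] at hℓ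
    obtain ⟨-, ⟨⟨hA, -⟩, hk⟩, hk'⟩ := hℓ
    have := nonneg_of_qfactInv_ne_zero hA
    have := nonneg_of_qfactInv_ne_zero hk
    have := nonneg_of_qfactInv_ne_zero hk'
    lia
  have hshift (ℓ : ℤ) : g ℓ = x ^ (k * (k - 1)) * f (ℓ + k) := by
    simp only [g, f, ← mul_assoc, ← zpow_add₀ hx0]
    ring_nf
  calc ∑ ℓ ∈ range (A + 1), x ^ (ℓ ^ 2 + ℓ) *
        (qfactInv x (A - ℓ) * qfactInv x (B - ℓ) * qfactInv x (ℓ + k) * qfactInv x (ℓ + 1 - k))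
      = ∑ᶠ ℓ, g ℓ := by
        rw [finsum_int_eq_sum_range hsupp]
        exact sum_congr rfl fun ℓ _ => by simp [g, ← zpow_natCast]
    _ = x ^ (k * (k - 1)) * ∑ᶠ ℓ, f (ℓ + k) := by rw [finsum_congr hshift, mul_finsum]
    _ = x ^ (k * (k - 1)) * ∑ᶠ u, f u := by
        rw [← finsum_comp_equiv (Equiv.addRight k) (f := f), Equiv.coe_addRight]
    _ = x ^ (k * (k - 1)) *
          (qfactInv x (A + k) * qfactInv x (B + 1 - k) * qbinom x (A + B + 1) (B + k)) := by
        rw [qfactInv_chu_vandermonde hx0 hx]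
        ring_nf

lemma qbinom_deletion (hx0 : x ≠ 0) (hx : ¬IsOfFinOrder x) (A B C : ℕ) (k : ℤ) :
    x ^ (k * (k - 1)) * (qfact x A * qfactInv x (A + 1 - k) * qbinom x (A + B + 1) (A + k) *
        qbinom x (B + C + 1) (B + k)) =
      ∑ ℓ ∈ range (A + 1), x ^ (ℓ ^ 2 + ℓ) * qbinom x A ℓ * qbinom x (B + C + 1) (B - ℓ) *
        (qfact x ℓ * qfactInv x (ℓ + 1 - k) * qbinom x (ℓ + C + 1) (ℓ + k)) := by
  have hterm (ℓ : ℕ) : x ^ (ℓ ^ 2 + ℓ) * qbinom x A ℓ * qbinom x (B + C + 1) (B - ℓ) *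
        (qfact x ℓ * qfactInv x (ℓ + 1 - k) * qbinom x (ℓ + C + 1) (ℓ + k)) =
      qfact x A * qfact x (B + C + 1) * qfactInv x (C + 1 - k) * (x ^ (ℓ ^ 2 + ℓ) *
        (qfactInv x (A - ℓ) * qfactInv x (B - ℓ) * qfactInv x (ℓ + k) *
          qfactInv x (ℓ + 1 - k))) := by
    have hℓ : qfact x ℓ * qfactInv x ℓ = 1 := by
      rw [qfactInv_natCast, mul_inv_cancel₀ (qfact_ne_zero hx ℓ)]
    have hℓC : qfact x (ℓ + C + 1) * qfactInv x (C + 1 + ℓ) = 1 := by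
      rw [← mul_inv_cancel₀ (qfact_ne_zero hx (ℓ + C + 1)), ← qfactInv_natCast]
      push_cast
      ring_nf
    have hB := qbinom_add_add_one x B C (-ℓ)
    rw [sub_neg_eq_add, ← sub_eq_add_neg] at hB
    rw [qbinom_natCast, qbinom_add_add_one, hB]
    linear_combination (qfact x A * qfact x (B + C + 1) * qfactInv x (C + 1 - k) *
      (x ^ (ℓ ^ 2 + ℓ) * (qfactInv x (A - ℓ) * qfactInv x (B - ℓ) * qfactInv x (ℓ + k) *
        qfactInv x (ℓ + 1 - k)))) *
      (qfact x (ℓ + C + 1) * qfactInv x (C + 1 + ℓ) * hℓ + hℓC)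
  have hAB : qbinom x (A + B + 1) (B + k) =
      qfact x (A + B + 1) * qfactInv x (B + k) * qfactInv x (A + 1 - k) := by
    simpa only [add_comm] using qbinom_add_add_one x B A k
  rw [sum_congr rfl fun ℓ _ => hterm ℓ, ← mul_sum, sum_qfactInv hx0 hx, hAB, qbinom_add_add_one,
    qbinom_add_add_one]
  ring

lemma prod_range_succ_cyclic {M : Type*} [CommMonoid M] (g : ℕ → ℕ → M) (t : ℕ) :
    ∏ i ∈ range (t + 1), g i ((i + 1) % (t + 1)) = (∏ i ∈ range t, g i (i + 1)) * g t 0 := by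
  rw [prod_range_succ, Nat.mod_self]
  congr 1
  exact prod_congr rfl fun i hi => by
    rw [Nat.mod_eq_of_lt (Nat.succ_lt_succ (mem_range.mp hi))]

-- The denominator of the prefactor cancels the numerator of the last `q`-binomial.
lemma mFactor_succ (hx : ¬IsOfFinOrder x) (t : ℕ) (m : ℕ → ℕ) (k : ℤ) :
    mFactor x (t + 1) m k = qfactInv x (m t + k) * (qfact x (m 0) * qfactInv x (m 0 + 1 - k) *
      ∏ i ∈ range t, qbinom x (m i + m (i + 1) + 1) (m i + k)) := by
  have hcancel := div_self (qfact_ne_zero hx (m 0 + m t + 1))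
  rw [mFactor, prod_range_succ_cyclic fun i j => qbinom x ((m i : ℤ) + m j + 1) (m i + k),
    qbinom_add_add_one x (m t) (m 0), add_comm (m t) (m 0), Nat.add_sub_cancel]
  linear_combination (qfactInv x (m t + k) * (qfact x (m 0) * qfactInv x (m 0 + 1 - k) *
      ∏ i ∈ range t, qbinom x (m i + m (i + 1) + 1) (m i + k))) * hcancel

lemma mFactor_deletion (hx0 : x ≠ 0) (hx : ¬IsOfFinOrder x) (t : ℕ) (m : ℕ → ℕ) (k : ℤ) :
    x ^ (k * (k - 1)) * mFactor x (t + 3) m k =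
      ∑ ℓ ∈ range (m 0 + 1), x ^ (ℓ ^ 2 + ℓ) * qbinom x (m 0) ℓ *
        qbinom x (m 1 + m 2 + 1) (m 1 - ℓ) *
        mFactor x (t + 2) (fun i => if i = 0 then ℓ else m (i + 1)) k := by
  let tail := qfactInv x (m (t + 2) + k) *
    ∏ i ∈ range t, qbinom x (m (i + 2) + m (i + 3) + 1) (m (i + 2) + k)
  calc x ^ (k * (k - 1)) * mFactor x (t + 3) m k
      = x ^ (k * (k - 1)) * (qfact x (m 0) * qfactInv x (m 0 + 1 - k) *
          qbinom x (m 0 + m 1 + 1) (m 0 + k) * qbinom x (m 1 + m 2 + 1) (m 1 + k)) * tail := by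
        rw [mFactor_succ hx, prod_range_succ', prod_range_succ']
        ring
    _ = _ := by
        rw [qbinom_deletion hx0 hx, sum_mul]
        refine sum_congr rfl fun ℓ _ => ?_
        rw [mFactor_succ hx, prod_range_succ']
        simp only [Nat.add_eq_zero_iff, one_ne_zero, OfNat.ofNat_ne_zero, and_false, reduceIte,
          zero_add, add_assoc, Nat.reduceAdd, tail]
        ring

lemma F_eq_sum (r s a b : ℕ) (m n : ℕ → ℕ) (x : RatFunc ℚ) :
    F r s a b m n x = ∑ k ∈ Icc (-(n 0 : ℤ)) (n 0),
      (-1) ^ k * x ^ ((a : ℤ) * k ^ 2 + (2 * (b : ℤ) - 1) * (k * (k - 1) / 2)) *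
        mFactor x r m k * nFactor x s n (m (r - 1)) k := by
  rw [F, mul_sum]
  refine sum_congr rfl fun k _ => ?_
  rw [mFactor, nFactor]
  ring

lemma zpow_weight_succ (hx0 : x ≠ 0) (a b : ℕ) (k : ℤ) :
    x ^ ((a : ℤ) * k ^ 2 + (2 * ((b + 1 : ℕ) : ℤ) - 1) * (k * (k - 1) / 2)) =
      x ^ ((a : ℤ) * k ^ 2 + (2 * (b : ℤ) - 1) * (k * (k - 1) / 2)) * x ^ (k * (k - 1)) := by
  have half : k * (k - 1) / 2 * 2 = k * (k - 1) :=
    Int.ediv_mul_cancel (Int.even_mul_pred_self k).two_dvd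
  rw [← zpow_add₀ hx0]
  congr 1
  push_cast
  linear_combination half

lemma not_isOfFinOrder_ratFuncX (K : Type*) [Field K] :
    ¬IsOfFinOrder (RatFunc.X : RatFunc K) := fun h => by
  obtain ⟨n, hn, hX⟩ := isOfFinOrder_iff_pow_eq_one.mp h
  have hX_integral : IsIntegral K (RatFunc.X : RatFunc K) :=
    .of_pow hn (hX ▸ isIntegral_one)
  exact RatFunc.transcendental_X hX_integral.isAlgebraic

theorem F_deletion_general (r s a b : ℕ) (hr : 3 ≤ r) (hb : 1 ≤ b) (m n : ℕ → ℕ)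
    (hx0 : x ≠ 0) (hx : ¬IsOfFinOrder x) :
    F r s a b m n x =
      ∑ ℓ ∈ range (m 0 + 1),
        x ^ (ℓ ^ 2 + ℓ) * qbinom x (m 0) ℓ * qbinom x (m 1 + m 2 + 1) (m 1 - ℓ) *
          F (r - 1) s a (b - 1) (fun i => if i = 0 then ℓ else m (i + 1)) n x := by
  obtain ⟨t, rfl⟩ := Nat.exists_eq_add_of_le' hr
  obtain ⟨b, rfl⟩ := Nat.exists_eq_add_of_le' hb
  have hlast (ℓ : ℕ) : (if t + 1 = 0 then ℓ else m (t + 1 + 1)) = m (t + 2) := if_neg (by lia)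
  simp only [F_eq_sum, Nat.add_sub_cancel, mul_sum, show t + 3 - 1 = t + 2 by lia,
    show t + 2 - 1 = t + 1 by lia, hlast]
  rw [sum_comm]
  refine sum_congr rfl fun k _ => ?_
  rw [zpow_weight_succ hx0, mul_assoc ((-1) ^ k), mul_assoc (x ^ _),
    mFactor_deletion hx0 hx, mul_sum, mul_sum, sum_mul]
  exact sum_congr rfl fun ℓ _ => by ring

/-- Deletion recurrence: for `r ≥ 3`, `s > 1`, nonnegative `m_i`, positive
`n_j`, `0 ≤ a ≤ s` and `2 ≤ b ≤ r`,
`F_{r,s}^{(b)}(m_1, m_2, …, m_r; n; a; q)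
  = Σ_{ℓ=0}^{m_1} q^{ℓ²+ℓ} [m_1 choose ℓ] [m_2+m_3+1 choose m_2-ℓ]
      F_{r-1,s}^{(b-1)}(ℓ, m_3, …, m_r; n; a; q)`. -/
theorem F_deletion (r s : ℕ) (hr : 3 ≤ r) (hs : 1 < s) (m n : ℕ → ℕ)
    (hn : ∀ j < s, 0 < n j) (a b : ℕ) (ha : a ≤ s) (hb2 : 2 ≤ b) (hbr : b ≤ r) :
    F r s a b m n RatFunc.X =
      ∑ ℓ ∈ Finset.range (m 0 + 1),
        (RatFunc.X : RatFunc ℚ) ^ (ℓ ^ 2 + ℓ) *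
          qbinom RatFunc.X (m 0 : ℤ) (ℓ : ℤ) *
          qbinom RatFunc.X ((m 1 : ℤ) + m 2 + 1) ((m 1 : ℤ) - ℓ) *
          F (r - 1) s a (b - 1) (fun i => if i = 0 then ℓ else m (i + 1)) n
            RatFunc.X := by
  exact F_deletion_general r s a b hr (by lia) m n RatFunc.X_ne_zero
    (not_isOfFinOrder_ratFuncX ℚ)

end
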